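/- Let N ≥ 1 and n ≥ N be integers and let L ≥ 0 be a real number with 2L a nonnegative integer. Then for every ζ ∈ ℂ the one-point correlation function of the symplectic induced spherical ensemble satisfies R_{N,1}(ζ) = (conj(ζ) − ζ) · κ̂_N(ζ, conj(ζ)) / (1+|ζ|²)^{2n+2L+2}. -/

import Mathlib

open MeasureTheory Filter Finset

noncomputable section

namespace SI

/-- The weight `w(ζ) = |ζ|^{4L}(1+|ζ|²)^{-2(n+L+1)}`. -/
def wfun (n L : ℝ) (ζ : ℂ) : ℝ :=
  ‖ζ‖ ^ (4*L) * (1 + ‖ζ‖ ^ 2) ^ (-(2*(n+L+1)))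

/-- The (unnormalised) joint eigenvalue density of the symplectic induced
spherical ensemble. -/
def jointDen (N : ℕ) (n L : ℝ) (ζs : Fin N → ℂ) : ℝ :=
  (∏ j : Fin N, ∏ k ∈ Finset.Ioi j,
     ‖ζs j - ζs k‖ ^ 2 * ‖ζs j - (starRingEnd ℂ) (ζs k)‖ ^ 2) *
  ∏ j : Fin N, (‖ζs j - (starRingEnd ℂ) (ζs j)‖ ^ 2 * wfun n L (ζs j))

/-- The normalisation constant `Z_N` (the factor `π⁻ᴺ` accounts for `dA = d²ζ/π`). -/
def ZN (N : ℕ) (n L : ℝ) : ℝ :=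
  (Real.pi)⁻¹ ^ N * ∫ ζs : Fin N → ℂ, jointDen N n L ζs

/-- The one-point correlation function `R_{N,1}`. -/
def R1 (N : ℕ) (n L : ℝ) (ζ : ℂ) : ℝ :=
  N * (ZN N n L)⁻¹ * (Real.pi)⁻¹ ^ (N-1) *
    ∫ ζs : Fin (N-1) → ℂ, jointDen (N-1+1) n L (Fin.cons ζ ζs)

/-- The kernel `G_N(ζ,η)` built from the skew-orthogonal polynomials of the
symplectic induced spherical ensemble (all powers are principal-branch `cpow`s,
which agree with the integer powers whenever `2L` is a nonnegative integer). -/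
def GK (N : ℕ) (n L : ℝ) (ζ η : ℂ) : ℂ :=
  ((Real.pi : ℂ) * Complex.Gamma ((2*n+2*L+2 : ℝ) : ℂ) / (2:ℂ) ^ ((2*n+2*L+1 : ℝ) : ℂ)) *
  ∑ k ∈ range N, ∑ l ∈ range (k+1),
    ζ ^ ((2*k+2*L+1 : ℝ) : ℂ) * η ^ ((2*l+2*L : ℝ) : ℂ) /
      (Complex.Gamma ((k+L+3/2 : ℝ) : ℂ) * Complex.Gamma ((n-k : ℝ) : ℂ) *
       Complex.Gamma ((n-l+1/2 : ℝ) : ℂ) * Complex.Gamma ((l+L+1 : ℝ) : ℂ))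

/-- The skew-symmetric kernel `κ̂_N(ζ,η) = G_N(ζ,η) - G_N(η,ζ)`. -/
def KK (N : ℕ) (n L : ℝ) (ζ η : ℂ) : ℂ := GK N n L ζ η - GK N n L η ζ

/-- The permutation of pairs built from a permutation of the pairs and flips. -/
def pairPerm {m : ℕ} (p : Equiv.Perm (Fin m) × (Fin m → Equiv.Perm (Fin 2))) :
    Equiv.Perm (Fin m × Fin 2) :=
  (Equiv.prodCongrLeft (fun _ => p.1)) * (Equiv.prodCongrRight p.2)

lemma pairPerm_apply {m : ℕ} (p : Equiv.Perm (Fin m) × (Fin m → Equiv.Perm (Fin 2)))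
    (j : Fin m) (x : Fin 2) : pairPerm p (j, x) = (p.1 j, p.2 j x) := by
  simp [pairPerm]

lemma sign_pairPerm {m : ℕ} (p : Equiv.Perm (Fin m) × (Fin m → Equiv.Perm (Fin 2))) :
    Equiv.Perm.sign (pairPerm p) = ∏ j, Equiv.Perm.sign (p.2 j) := by
  simp [pairPerm, Equiv.Perm.sign_prodCongrRight, Equiv.Perm.sign_prodCongrLeft,
    Int.units_sq]

lemma pairPerm_surj {m : ℕ} (σ : Equiv.Perm (Fin (m+1) × Fin 2))
    (h : ∀ j ≠ 0, (σ (j,0)).1 = (σ (j,1)).1) : ∃ p, pairPerm p = σ := by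
  have hx : ∀ x : Fin 2, x = 0 ∨ x = 1 := by decide
  have h1 : ∀ j ≠ 0, ∀ x y, (σ (j,x)).1 = (σ (j,y)).1 := by
    intro j hj x y
    rcases hx x with rfl | rfl <;> rcases hx y with rfl | rfl <;> simp [h j hj]
  have h0 : (σ (0,0)).1 = (σ (0,1)).1 := by
    obtain ⟨⟨j, y⟩, hjy⟩ := σ.surjective ((σ (0,0)).1, 1 - (σ (0,0)).2)
    have hne : ∀ x : Fin 2, 1 - x ≠ x := by decide
    by_cases hj : j = 0
    · subst hj
      rcases hx y with rfl | rfl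
      · exact absurd (congrArg Prod.snd hjy).symm (hne _)
      · rw [hjy]
    · have e := h1 j hj (1 - y) y
      rw [hjy] at e
      have h3 : ∀ x z : Fin 2, x = z ∨ x = 1 - z := by decide
      rcases h3 (σ (j, 1-y)).2 (σ (0,0)).2 with e2 | e2
      · have : σ (j, 1-y) = σ (0,0) := Prod.ext e e2
        have := congrArg Prod.fst (σ.injective this)
        exact absurd this hj
      · have : σ (j, 1-y) = σ (j,y) := by rw [hjy]; exact Prod.ext e e2
        have := congrArg Prod.snd (σ.injective this)
        exact absurd this (hne y)
  have h2 : ∀ j x, (σ (j,x)).1 = (σ (j,0)).1 := by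
    intro j x
    by_cases hj : j = 0
    · subst hj
      rcases hx x with rfl | rfl
      · rfl
      · exact h0.symm
    · exact h1 j hj _ _
  have hs : Function.Surjective (fun j => (σ (j,0)).1) := by
    intro k
    obtain ⟨⟨j, y⟩, hjy⟩ := σ.surjective (k, 0)
    refine ⟨j, ?_⟩
    simp only
    rw [← h2 j y, hjy]
  have hi : ∀ j, Function.Injective (fun x => (σ (j,x)).2) := by
    intro j x y hxy
    have : σ (j,x) = σ (j,y) := Prod.ext (by rw [h2 j x, h2 j y]) hxy
    exact congrArg Prod.snd (σ.injective this)
  refine ⟨(Equiv.ofBijective _ (Finite.surjective_iff_bijective.mp hs),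
    fun j => Equiv.ofBijective _ (Finite.injective_iff_bijective.mp (hi j))), ?_⟩
  ext1 ⟨j, x⟩
  rw [pairPerm_apply]
  exact Prod.ext (h2 j x).symm rfl

lemma comb {m : ℕ} (B : Fin (m+1) → (Fin (m+1) × Fin 2) → (Fin (m+1) × Fin 2) → ℂ)
    (hB : ∀ j ≠ 0, ∀ a b, a.1 ≠ b.1 → B j a b = 0) :
    ∑ σ : Equiv.Perm (Fin (m+1) × Fin 2), ((Equiv.Perm.sign σ : ℤ) : ℂ) *
        ∏ j, B j (σ (j,0)) (σ (j,1)) =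
      ∑ p : Equiv.Perm (Fin (m+1)), ∏ j, (B j (p j,0) (p j,1) - B j (p j,1) (p j,0)) := by
  have e1 : ∀ p : Equiv.Perm (Fin (m+1)), ∏ j, (B j (p j,0) (p j,1) - B j (p j,1) (p j,0)) =
      ∑ s : Fin (m+1) → Equiv.Perm (Fin 2),
        ∏ j, (((Equiv.Perm.sign (s j) : ℤ) : ℂ) * B j (p j, s j 0) (p j, s j 1)) := by
    intro p
    have := Finset.prod_univ_sum (fun _ : Fin (m+1) => (Finset.univ : Finset (Equiv.Perm (Fin 2))))
      (fun j s => (((Equiv.Perm.sign s : ℤ) : ℂ) * B j (p j, s 0) (p j, s 1)))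
    rw [Fintype.piFinset_univ] at this
    rw [← this]
    refine Finset.prod_congr rfl fun j _ => ?_
    have hu : (Finset.univ : Finset (Equiv.Perm (Fin 2))) = {1, Equiv.swap 0 1} := by decide
    rw [hu, Finset.sum_pair (by decide)]
    simp [Equiv.Perm.sign_swap, sub_eq_add_neg]
  simp_rw [e1]
  rw [← Fintype.sum_prod_type' (f := fun (p : Equiv.Perm (Fin (m+1))) (s : Fin (m+1) → Equiv.Perm (Fin 2)) =>
    ∏ j, (((Equiv.Perm.sign (s j) : ℤ) : ℂ) * B j (p j, s j 0) (p j, s j 1)))]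
  symm
  refine Finset.sum_of_injOn pairPerm ?_ (by simp) ?_ ?_
  · rintro ⟨p, s⟩ - ⟨p', s'⟩ - h
    have h' : ∀ j x, (p j, s j x) = (p' j, s' j x) := by
      intro j x
      have := congrArg (fun e => e (j,x)) h
      simpa only [pairPerm_apply] using this
    refine Prod.ext ?_ ?_
    · ext1 j; exact congrArg Prod.fst (h' j 0)
    · funext j; ext1 x; exact congrArg Prod.snd (h' j x)
  · intro σ _ hσ
    by_cases h : ∀ j ≠ 0, (σ (j,0)).1 = (σ (j,1)).1
    · obtain ⟨p, hp⟩ := pairPerm_surj σ h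
      exact absurd ⟨p, by simp, hp⟩ hσ
    · push Not at h
      obtain ⟨j, hj, hne⟩ := h
      rw [Finset.prod_eq_zero (Finset.mem_univ j) (hB j hj _ _ hne), mul_zero]
  · rintro ⟨p, s⟩ -
    simp only [pairPerm_apply, sign_pairPerm, Finset.prod_mul_distrib]
    push_cast
    rfl

lemma sum_perm_zero {m : ℕ} (f : Fin (m+1) → ℂ) :
    ∑ p : Equiv.Perm (Fin (m+1)), f (p 0) = (m.factorial : ℂ) * ∑ k, f k := by
  rw [← Equiv.sum_comp Equiv.Perm.decomposeFin.symm, Fintype.sum_prod_type, Finset.mul_sum]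
  simp [Equiv.Perm.decomposeFin_symm_apply_zero, Fintype.card_perm]

lemma vander {N : ℕ} (ζs : Fin N → ℂ) (x : Fin N × Fin 2 → ℂ)
    (h0 : ∀ j, x (j,0) = ζs j) (h1 : ∀ j, x (j,1) = (starRingEnd ℂ) (ζs j)) :
    (Matrix.vandermonde (fun i => x (finProdFinEquiv.symm i))).det =
    (((∏ j : Fin N, ∏ k ∈ Finset.Ioi j,
     ‖ζs j - ζs k‖ ^ 2 * ‖ζs j - (starRingEnd ℂ) (ζs k)‖ ^ 2 : ℝ)) : ℂ) *
      ∏ j, ((starRingEnd ℂ) (ζs j) - ζs j) := by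
  rw [Matrix.det_vandermonde]
  have e (n : ℕ) (f : Fin n → Fin n → ℂ) : ∏ i, ∏ j ∈ Finset.Ioi i, f i j =
      ∏ i, ∏ j, if i < j then f i j else 1 := by
    refine Finset.prod_congr rfl fun i _ => ?_
    rw [← Finset.prod_filter]
    congr 1
    ext; simp
  push_cast
  rw [e, e, ← Equiv.prod_comp finProdFinEquiv, Fintype.prod_prod_type, ← Finset.prod_mul_distrib]
  refine Finset.prod_congr rfl fun j _ => ?_
  simp_rw [← Equiv.prod_comp (finProdFinEquiv (m := N) (n := 2)), Fintype.prod_prod_type]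
  rw [Fin.prod_univ_two, ← Finset.prod_mul_distrib]
  have : (starRingEnd ℂ) (ζs j) - ζs j = ∏ k, if j = k then (starRingEnd ℂ) (ζs k) - ζs k else 1 := by
    simp
  rw [this, ← Finset.prod_mul_distrib]
  refine Finset.prod_congr rfl fun k _ => ?_
  simp only [Fin.prod_univ_two, Equiv.symm_apply_apply, h0, h1, Fin.lt_def, finProdFinEquiv_apply_val,
    Fin.ext_iff]
  have hn : ∀ z : ℂ, ((‖z‖ : ℝ) : ℂ)^2 = z * (starRingEnd ℂ) z := by
    intro z; rw [Complex.mul_conj, Complex.normSq_eq_norm_sq]; push_cast; rfl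
  rcases lt_trichotomy (j:ℕ) k with h | h | h
  · rw [if_pos, if_pos, if_pos, if_pos, if_pos h, if_neg h.ne, hn, hn] <;> try (simp; omega)
    simp; ring
  · have : j = k := Fin.ext h
    subst this
    simp
  · rw [if_neg, if_neg, if_neg, if_neg, if_neg h.not_gt, if_neg h.ne'] <;> try (simp; omega)
    simp

lemma tendsto_inv_pow (d : ℕ) :
    Tendsto (fun y : ℝ => ((1 + y^2)^(d+1))⁻¹) atTop (nhds 0) := by
  apply Tendsto.inv_tendsto_atTop
  apply (tendsto_pow_atTop (by omega : d + 1 ≠ 0)).comp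
  exact tendsto_atTop_add_const_left _ _ (tendsto_pow_atTop (by norm_num))

lemma radial (a : ℕ) : ∀ d : ℕ,
    IntegrableOn (fun y : ℝ => y^(2*a+1) / (1+y^2)^(a+d+2)) (Set.Ioi 0) ∧
    ∫ y in Set.Ioi (0:ℝ), y^(2*a+1) / (1+y^2)^(a+d+2) =
      (a.factorial * d.factorial : ℝ) / (2 * (a+d+1).factorial) := by
  induction a with
  | zero =>
    intro d
    have hd : ∀ x ∈ Set.Ici (0:ℝ), HasDerivAt
        (fun y : ℝ => -(1/(2*(d+1):ℝ)) * ((1 + y^2)^(d+1))⁻¹)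
        (x^(2*0+1) / (1+x^2)^(0+d+2)) x := by
      intro x _
      have hp : (1 + x^2) ≠ 0 := by positivity
      have h1 : HasDerivAt (fun y : ℝ => 1 + y^2) (2*x) x := by
        simpa using (hasDerivAt_pow 2 x).const_add 1
      have := ((h1.fun_pow (d+1)).fun_inv (pow_ne_zero _ hp)).const_mul (-(1/(2*(d+1):ℝ)))
      refine this.congr_deriv ?_
      have : (d:ℝ)+1 ≠ 0 := by positivity
      push_cast
      field_simp
      ring
    have hl : Tendsto (fun y : ℝ => -(1/(2*(d+1):ℝ)) * ((1 + y^2)^(d+1))⁻¹) atTop (nhds 0) := by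
      simpa using (tendsto_inv_pow d).const_mul (-(1/(2*(d+1):ℝ)))
    have hpos : ∀ x ∈ Set.Ioi (0:ℝ), 0 ≤ x^(2*0+1) / (1+x^2)^(0+d+2) := by
      intro x hx
      have : 0 < x := hx
      positivity
    refine ⟨integrableOn_Ioi_deriv_of_nonneg' hd hpos hl, ?_⟩
    rw [integral_Ioi_of_hasDerivAt_of_nonneg' hd hpos hl]
    simp [Nat.factorial_succ]
    field_simp
  | succ a ih =>
    intro d
    obtain ⟨ih1, ih2⟩ := ih d
    have hint : IntegrableOn (fun y : ℝ => y^(2*(a+1)+1) / (1+y^2)^(a+1+d+2)) (Set.Ioi 0) := by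
      refine Integrable.mono' ih1 (by
        apply Continuous.aestronglyMeasurable
        refine Continuous.div (by fun_prop) (by fun_prop) (fun x => by positivity)) ?_
      refine (ae_restrict_iff' measurableSet_Ioi).mpr (ae_of_all _ fun x hx => ?_)
      have hx0 : 0 < x := hx
      rw [Real.norm_of_nonneg (by positivity), div_le_div_iff₀ (by positivity) (by positivity)]
      have : x^(2*(a+1)+1) * (1+x^2)^(a+d+2) = (x^(2*a+1) * (1+x^2)^(a+d+2)) * x^2 := by ring
      rw [this]
      have : x^(2*a+1) * (1+x^2)^(a+1+d+2) = (x^(2*a+1) * (1+x^2)^(a+d+2)) * (1+x^2) := by ring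
      rw [this]
      gcongr
      linarith
    refine ⟨hint, ?_⟩
    have hd : ∀ x ∈ Set.Ici (0:ℝ), HasDerivAt
        (fun y : ℝ => y^(2*a+2) * ((1 + y^2)^(a+d+2))⁻¹)
        ((2*a+2) * (x^(2*a+1) / (1+x^2)^(a+d+2)) - (2*(a+d+2)) * (x^(2*(a+1)+1) / (1+x^2)^(a+1+d+2))) x := by
      intro x _
      have hp : (1 + x^2) ≠ 0 := by positivity
      have h1 : HasDerivAt (fun y : ℝ => 1 + y^2) (2*x) x := by
        simpa using (hasDerivAt_pow 2 x).const_add 1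
      have := (hasDerivAt_pow (2*a+2) x).fun_mul ((h1.fun_pow (a+d+2)).fun_inv (pow_ne_zero _ hp))
      refine this.congr_deriv ?_
      have e1 : 2*a+2-1 = 2*a+1 := by omega
      have e2 : a+d+2-1 = a+d+1 := by omega
      rw [e1, e2]
      push_cast
      field_simp
      ring
    have hl : Tendsto (fun y : ℝ => y^(2*a+2) * ((1 + y^2)^(a+d+2))⁻¹) atTop (nhds 0) := by
      refine squeeze_zero' ?_ ?_ (tendsto_inv_pow d)
      · filter_upwards with y
        have : 0 ≤ y^(2*a+2) := by
          rw [show 2*a+2 = 2*(a+1) by ring, pow_mul]; positivity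
        positivity
      · filter_upwards with y
        rw [← div_eq_mul_inv, div_le_iff₀ (by positivity)]
        have : ((1+y^2)^(d+1))⁻¹ * (1+y^2)^(a+d+2) = (1+y^2)^(a+1) := by
          have hp : (1 + y^2) ≠ 0 := by positivity
          rw [show a+d+2 = (d+1)+(a+1) by ring, pow_add _ (d+1) (a+1), ← mul_assoc,
            inv_mul_cancel₀ (pow_ne_zero _ hp), one_mul]
        rw [this, show 2*a+2 = 2*(a+1) by ring, pow_mul]
        gcongr
        linarith
    have key := integral_Ioi_of_hasDerivAt_of_tendsto' hd
      ((ih1.const_mul _).sub (hint.const_mul _)) hl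
    rw [integral_sub (ih1.const_mul _) (hint.const_mul _), integral_const_mul, integral_const_mul,
      ih2] at key
    simp only [ne_eq, Nat.add_eq_zero_iff, OfNat.ofNat_ne_zero, and_false, not_false_eq_true, zero_pow,
      zero_mul, sub_zero] at key
    have h3 : (a:ℝ)+d+2 ≠ 0 := by positivity
    rw [show a+1+d+1 = (a+d+1)+1 by ring, Nat.factorial_succ, Nat.factorial_succ]
    push_cast
    rw [sub_eq_zero] at key
    have hf : ((a+d+1).factorial : ℝ) ≠ 0 := by positivity
    have h4 : (a:ℝ)+d+1+1 ≠ 0 := by positivity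
    rw [eq_div_iff (by positivity)]
    have : (∫ y in Set.Ioi (0:ℝ), y^(2*(a+1)+1) / (1+y^2)^(a+1+d+2)) * (2*(((a:ℝ)+d+1+1) * ((a+d+1).factorial:ℝ)))
      = (2*((a:ℝ)+d+2) * ∫ y in Set.Ioi (0:ℝ), y^(2*(a+1)+1) / (1+y^2)^(a+1+d+2)) * ((a+d+1).factorial:ℝ) := by ring
    rw [this, ← key]
    field_simp
    

/-- The weight with natural exponents. -/
def W (n M : ℕ) (ζ : ℂ) : ℝ := ‖ζ‖^(2*M) / (1 + ‖ζ‖^2)^(2*n+M+2)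

lemma wfun_eq (n M : ℕ) (L : ℝ) (hM : 2*L = (M:ℝ)) (ζ : ℂ) : wfun n L ζ = W n M ζ := by
  unfold wfun W
  have e1 : 4*L = ((2*M : ℕ) : ℝ) := by push_cast; linarith
  have e2 : -(2*((n:ℝ)+L+1)) = -((2*n+M+2 : ℕ) : ℝ) := by push_cast; linarith
  rw [e1, e2, Real.rpow_natCast, Real.rpow_neg (by positivity), Real.rpow_natCast, div_eq_mul_inv]

lemma W_cont (n M : ℕ) : Continuous (W n M) := by
  unfold W
  refine Continuous.div (by fun_prop) (by fun_prop) (fun x => by positivity)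

lemma integrable_mono (n M a b : ℕ) (hab : a + b ≤ 4*n) :
    Integrable (fun ζ : ℂ => ζ^a * ((starRingEnd ℂ) ζ)^b * (W n M ζ : ℂ)) := by
  have h0 : Integrable (fun ζ : ℂ => (1 + ‖ζ‖^2)^(-(4:ℝ)/2)) :=
    integrable_rpow_neg_one_add_norm_sq (by rw [Complex.finrank_real_complex]; norm_num)
  refine h0.mono' ?_ (ae_of_all _ fun ζ => ?_)
  · apply Continuous.aestronglyMeasurable
    have := W_cont n M
    have h2 : Continuous (starRingEnd ℂ) := Complex.continuous_conj
    fun_prop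
  · have hp : 0 < 1 + ‖ζ‖^2 := by positivity
    have e : (1 + ‖ζ‖^2)^(-(4:ℝ)/2) = ((1 + ‖ζ‖^2)^2)⁻¹ := by
      rw [show -(4:ℝ)/2 = -((2:ℕ):ℝ) by norm_num, Real.rpow_neg hp.le, Real.rpow_natCast]
    rw [e, norm_mul, norm_mul, norm_pow, norm_pow, Complex.norm_real, RCLike.norm_conj,
      Real.norm_of_nonneg (by unfold W; positivity)]
    unfold W
    rw [← pow_add, ← mul_div_assoc, div_le_iff₀ (by positivity)]
    have : ((1 + ‖ζ‖^2)^2)⁻¹ * (1 + ‖ζ‖^2)^(2*n+M+2) = (1 + ‖ζ‖^2)^(2*n) * (1 + ‖ζ‖^2)^M := by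
      rw [show 2*n+M+2 = 2 + (2*n+M) by ring, pow_add, ← mul_assoc,
            inv_mul_cancel₀ (pow_ne_zero _ hp.ne'), one_mul, pow_add]
    rw [this, pow_mul ‖ζ‖ 2 M]
    have h1 : ‖ζ‖^(a+b) ≤ (1 + ‖ζ‖^2)^(2*n) := by
      rcases le_total ‖ζ‖ 1 with h | h
      · exact (pow_le_one₀ (norm_nonneg _) h).trans (one_le_pow₀ (by nlinarith [norm_nonneg ζ]))
      · calc ‖ζ‖^(a+b) ≤ ‖ζ‖^(4*n) := pow_le_pow_right₀ h hab
          _ = (‖ζ‖^2)^(2*n) := by rw [← pow_mul]; ring_nf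
          _ ≤ _ := by gcongr; linarith
    gcongr
    linarith

/-- Radial moments. -/
def hm (n M a : ℕ) : ℝ := ((a+M).factorial * (2*n-a).factorial : ℝ) / (2*n+M+1).factorial

lemma moment_diag (n M a : ℕ) (ha : a ≤ 2*n) :
    ∫ ζ : ℂ, ζ^a * ((starRingEnd ℂ) ζ)^a * (W n M ζ : ℂ) = Real.pi * hm n M a := by
  have e : ∀ ζ : ℂ, ζ^a * ((starRingEnd ℂ) ζ)^a * (W n M ζ : ℂ) =
      (((fun y : ℝ => y^(2*(a+M)) / (1+y^2)^(2*n+M+2)) ‖ζ‖ : ℝ) : ℂ) := by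
    intro ζ
    rw [← mul_pow, Complex.mul_conj, Complex.normSq_eq_norm_sq]
    unfold W
    push_cast
    rw [mul_add, pow_add _ (2*a) (2*M), pow_mul _ 2 a]
    ring
  simp_rw [e]
  rw [integral_complex_ofReal, integral_fun_norm_addHaar volume (fun y : ℝ => y^(2*(a+M)) / (1+y^2)^(2*n+M+2))]
  obtain ⟨d, hd⟩ : ∃ d, 2*n = a + d := ⟨2*n-a, by omega⟩
  have hr := (radial (a+M) d).2
  have e2 : ∀ y : ℝ, y ^ (Module.finrank ℝ ℂ - 1) • (y^(2*(a+M)) / (1+y^2)^(2*n+M+2)) =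
     y^(2*(a+M)+1) / (1+y^2)^(a+M+d+2) := by
    intro y
    rw [Complex.finrank_real_complex, smul_eq_mul, show 2*n+M+2 = a+M+d+2 by omega]
    simp only [Nat.add_one_sub_one, pow_one]
    ring
  simp_rw [e2]
  rw [hr, Complex.finrank_real_complex, Measure.real, Complex.volume_ball, hm,
    show 2*n-a = d by omega, show 2*n+M+1 = a+M+d+1 by omega]
  simp
  field_simp

lemma moment_off (n M a b : ℕ) (hab : a ≠ b) :
    ∫ ζ : ℂ, ζ^a * ((starRingEnd ℂ) ζ)^b * (W n M ζ : ℂ) = 0 := by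
  have hne : ((a:ℝ) - b) ≠ 0 := sub_ne_zero.mpr (by exact_mod_cast hab)
  set θ : ℝ := Real.pi / (a - b) with hθ
  set u : Circle := Circle.exp θ with hu
  have hmp := (rotation u).measurePreserving
  have h1 := hmp.integral_comp (rotation u).toHomeomorph.measurableEmbedding
    (fun ζ : ℂ => ζ^a * ((starRingEnd ℂ) ζ)^b * (W n M ζ : ℂ))
  have hc : (u:ℂ)^a * ((starRingEnd ℂ) (u:ℂ))^b = -1 := by
    rw [← Circle.coe_inv_eq_conj, hu, ← Circle.exp_neg, Circle.coe_exp, Circle.coe_exp,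
      ← Complex.exp_nat_mul, ← Complex.exp_nat_mul, ← Complex.exp_add, ← Complex.exp_pi_mul_I]
    congr 1
    have : (a:ℝ) * θ + b * (-θ) = Real.pi := by rw [hθ]; field_simp; ring
    have := congrArg (fun x : ℝ => (x:ℂ)) this
    push_cast at this ⊢
    rw [← this]; ring
  have h2 : ∀ ζ : ℂ, ((rotation u) ζ)^a * ((starRingEnd ℂ) ((rotation u) ζ))^b * (W n M ((rotation u) ζ) : ℂ)
      = - (ζ^a * ((starRingEnd ℂ) ζ)^b * (W n M ζ : ℂ)) := by
    intro ζ
    have hw : W n M ((rotation u) ζ) = W n M ζ := by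
      unfold W; rw [LinearIsometryEquiv.norm_map]
    rw [hw, rotation_apply, map_mul, mul_pow, mul_pow]
    linear_combination (ζ^a * ((starRingEnd ℂ) ζ)^b * (W n M ζ : ℂ)) * hc
  simp only [h2] at h1
  rw [integral_neg] at h1
  have : (2:ℂ) * (∫ ζ : ℂ, ζ^a * ((starRingEnd ℂ) ζ)^b * (W n M ζ : ℂ)) = 0 := by
    linear_combination (-1:ℂ) * h1
  simpa using this

lemma moment (n M a b : ℕ) (ha : a ≤ 2*n) :
    ∫ ζ : ℂ, ζ^a * ((starRingEnd ℂ) ζ)^b * (W n M ζ : ℂ) =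
      if a = b then (Real.pi * hm n M a : ℂ) else 0 := by
  split_ifs with h
  · subst h; exact moment_diag n M a ha
  · exact moment_off n M a b h

/-- Gamma-function coefficients. -/
def Ec (n : ℕ) (L : ℝ) (l : ℕ) : ℝ :=
  (Real.Gamma ((n:ℝ)-l+1/2) * Real.Gamma ((l:ℝ)+L+1))⁻¹

lemma Ec_pos (n : ℕ) (L : ℝ) (hL : 0 ≤ L) (l : ℕ) (hl : l ≤ n) : 0 < Ec n L l := by
  have : (l:ℝ) ≤ n := by exact_mod_cast hl
  unfold Ec
  have h1 := Real.Gamma_pos_of_pos (show (0:ℝ) < (n:ℝ)-l+1/2 by linarith)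
  have h2 := Real.Gamma_pos_of_pos (show (0:ℝ) < (l:ℝ)+L+1 by positivity)
  positivity

lemma hm_pos (n M a : ℕ) : 0 < hm n M a := by unfold hm; positivity

lemma Ec_rec (n M : ℕ) (L : ℝ) (hL : 0 ≤ L) (hM : 2*L = (M:ℝ)) (l : ℕ) (hl : l + 1 ≤ n) :
    Ec n L l * hm n M (2*l+1) = Ec n L (l+1) * hm n M (2*l+2) := by
  have hl' : (l:ℝ) + 1 ≤ n := by exact_mod_cast hl
  unfold Ec hm
  obtain ⟨d, hd⟩ : ∃ d, n = l + 1 + d := ⟨n - (l+1), by omega⟩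
  have hd' : (n:ℝ) = l + 1 + d := by exact_mod_cast hd
  have g1 : Real.Gamma ((n:ℝ)-l+1/2) = ((d:ℝ)+1/2) * Real.Gamma ((d:ℝ)+1/2) := by
    rw [← Real.Gamma_add_one (by positivity)]; congr 1; rw [hd']; ring
  have g2 : Real.Gamma ((n:ℝ)-(l+1:ℕ)+1/2) = Real.Gamma ((d:ℝ)+1/2) := by
    congr 1; rw [hd']; push_cast; ring
  have g3 : Real.Gamma (((l+1:ℕ):ℝ)+L+1) = ((l:ℝ)+L+1) * Real.Gamma ((l:ℝ)+L+1) := by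
    rw [← Real.Gamma_add_one (by positivity)]; congr 1; push_cast; ring
  have p1 := Real.Gamma_pos_of_pos (show (0:ℝ) < (d:ℝ)+1/2 by positivity)
  have p2 := Real.Gamma_pos_of_pos (show (0:ℝ) < (l:ℝ)+L+1 by positivity)
  rw [g1, g2, g3, show 2*n-(2*l+1) = 2*d+1 by omega, show 2*n-(2*l+2) = 2*d by omega,
    show 2*l+2+M = (2*l+1+M)+1 by ring, Nat.factorial_succ (2*d), Nat.factorial_succ (2*l+1+M)]
  have p3 : (0:ℝ) < (l:ℝ)+L+1 := by positivity
  push_cast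
  rw [← hM]
  field_simp
  ring

lemma dup (n M : ℕ) (L : ℝ) (hL : 0 ≤ L) (hM : 2*L = (M:ℝ)) (k : ℕ) (hk : k < n) :
    1 / (Ec n L k * (2 * hm n M (2*k+1))) =
    (Real.pi * Real.Gamma (2*n+2*L+2) / 2^(2*(n:ℝ)+2*L+1)) /
      (Real.Gamma ((k:ℝ)+L+3/2) * Real.Gamma ((n:ℝ)-k)) := by
  have hk' : (k:ℝ) + 1 ≤ n := by exact_mod_cast hk
  have d1 := Real.Gamma_mul_Gamma_add_half ((k:ℝ)+L+1)
  have d2 := Real.Gamma_mul_Gamma_add_half ((n:ℝ)-k)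
  have p1 := Real.Gamma_pos_of_pos (show (0:ℝ) < (k:ℝ)+L+1 by positivity)
  have p2 := Real.Gamma_pos_of_pos (show (0:ℝ) < (k:ℝ)+L+3/2 by positivity)
  have p3 := Real.Gamma_pos_of_pos (show (0:ℝ) < (n:ℝ)-k by linarith)
  have p4 := Real.Gamma_pos_of_pos (show (0:ℝ) < (n:ℝ)-k+1/2 by linarith)
  have f1 : Real.Gamma (2*((k:ℝ)+L+1)) = (2*k+1+M).factorial := by
    rw [← Real.Gamma_nat_eq_factorial]; congr 1; push_cast; rw [← hM]; ring
  have f2 : Real.Gamma (2*((n:ℝ)-k)) = (2*n-(2*k+1)).factorial := by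
    rw [← Real.Gamma_nat_eq_factorial, Nat.cast_sub (by omega)]; congr 1; push_cast; ring
  have f3 : Real.Gamma (2*n+2*L+2) = (2*n+M+1).factorial := by
    rw [← Real.Gamma_nat_eq_factorial]; congr 1; push_cast; rw [← hM]; ring
  rw [show (k:ℝ)+L+1+1/2 = (k:ℝ)+L+3/2 by ring] at d1
  rw [f1] at d1
  rw [f2] at d2
  have hpow : (2:ℝ)^(1-2*((k:ℝ)+L+1)) * 2^(1-2*((n:ℝ)-k)) * 2^(2*(n:ℝ)+2*L+1) = 2 := by
    rw [← Real.rpow_add two_pos, ← Real.rpow_add two_pos]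
    ring_nf
    norm_num
  have hs : √Real.pi * √Real.pi = Real.pi := Real.mul_self_sqrt Real.pi_pos.le
  have p5 : (0:ℝ) < 2^(2*(n:ℝ)+2*L+1) := by positivity
  rw [f3]
  unfold Ec hm
  have hF : (0:ℝ) < (2*n+M+1).factorial := by positivity
  rw [div_eq_div_iff (by positivity) (by positivity), one_mul]
  set A := Real.Gamma ((k:ℝ)+L+1)
  set B := Real.Gamma ((k:ℝ)+L+3/2)
  set C := Real.Gamma ((n:ℝ)-k)
  set D := Real.Gamma ((n:ℝ)-k+1/2)
  set P := (2:ℝ)^(2*(n:ℝ)+2*L+1)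
  have key : A * B * (C * D) * P = (2*k+1+M).factorial * (2*n-(2*k+1)).factorial * 2 * Real.pi := by
    rw [d1, d2]
    linear_combination ((2*k+1+M).factorial * (2*n-(2*k+1)).factorial * (√Real.pi * √Real.pi) : ℝ) * hpow
      + ((2*k+1+M).factorial * (2*n-(2*k+1)).factorial * 2 : ℝ) * hs
  field_simp
  linear_combination key

/-- Coefficients of the skew-orthogonal polynomials. -/
def cf (n : ℕ) (L : ℝ) (k : ℕ) (x : Fin 2) (l : ℕ) : ℂ :=
  if x = 0 then ((Ec n L l / Ec n L k : ℝ) : ℂ) else if l = k then 1 else 0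

/-- Skew-orthogonal polynomials. -/
def qq (n : ℕ) (L : ℝ) (k : ℕ) (x : Fin 2) : Polynomial ℂ :=
  ∑ l ∈ range (k+1), Polynomial.C (cf n L k x l) * Polynomial.X ^ (2*l+(x:ℕ))

lemma cf_self (n : ℕ) (L : ℝ) (hL : 0 ≤ L) (k : ℕ) (hk : k ≤ n) (x : Fin 2) : cf n L k x k = 1 := by
  unfold cf
  rw [div_self (Ec_pos n L hL k hk).ne']
  simp

lemma qq_monic (n : ℕ) (L : ℝ) (hL : 0 ≤ L) (k : ℕ) (hk : k ≤ n) (x : Fin 2) :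
    (qq n L k x).Monic ∧ (qq n L k x).natDegree = x + 2*k := by
  have hd : (∑ l ∈ range k, Polynomial.C (cf n L k x l) * Polynomial.X ^ (2*l+(x:ℕ))).degree <
      ((2*k+(x:ℕ) : ℕ) : WithBot ℕ) := by
    rw [← Polynomial.mem_degreeLT]
    refine Submodule.sum_mem _ fun l hl => ?_
    rw [Polynomial.mem_degreeLT]
    refine (Polynomial.degree_C_mul_X_pow_le _ _).trans_lt ?_
    have := Finset.mem_range.mp hl
    exact_mod_cast (by omega)
  have e : qq n L k x = Polynomial.X ^ (2*k+(x:ℕ)) +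
      ∑ l ∈ range k, Polynomial.C (cf n L k x l) * Polynomial.X ^ (2*l+(x:ℕ)) := by
    rw [qq, Finset.sum_range_succ, cf_self n L hL k hk, Polynomial.C_1, one_mul, add_comm]
  have hm := Polynomial.monic_X_pow_add hd
  rw [e]
  refine ⟨hm, ?_⟩
  rw [Polynomial.natDegree_eq_of_degree_eq_some (n := 2*k+(x:ℕ)), add_comm]
  rw [Polynomial.degree_add_eq_left_of_degree_lt] <;> rw [Polynomial.degree_X_pow]
  exact hd

/-- Integrand. -/
def FF (n M : ℕ) (L : ℝ) (k : ℕ) (x : Fin 2) (k' : ℕ) (x' : Fin 2) (ζ : ℂ) : ℂ :=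
  (qq n L k x).eval ζ * (qq n L k' x').eval ((starRingEnd ℂ) ζ) *
    ((ζ - (starRingEnd ℂ) ζ) * (W n M ζ : ℂ))

lemma FF_eq (n M : ℕ) (L : ℝ) (k : ℕ) (x : Fin 2) (k' : ℕ) (x' : Fin 2) (ζ : ℂ) :
    FF n M L k x k' x' ζ = ∑ l ∈ range (k+1), ∑ l' ∈ range (k'+1),
      cf n L k x l * cf n L k' x' l' *
        (ζ^(2*l+(x:ℕ)+1) * ((starRingEnd ℂ) ζ)^(2*l'+(x':ℕ)) * (W n M ζ : ℂ)
          - ζ^(2*l+(x:ℕ)) * ((starRingEnd ℂ) ζ)^(2*l'+(x':ℕ)+1) * (W n M ζ : ℂ)) := by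
  unfold FF qq
  rw [Polynomial.eval_finsetSum, Polynomial.eval_finsetSum, Finset.sum_mul_sum, Finset.sum_mul]
  refine Finset.sum_congr rfl fun l _ => ?_
  rw [Finset.sum_mul]
  refine Finset.sum_congr rfl fun l' _ => ?_
  simp only [Polynomial.eval_mul, Polynomial.eval_C, Polynomial.eval_pow, Polynomial.eval_X]
  ring

lemma FF_term_integrable (n M : ℕ) (a b : ℕ) (ha : a + 1 ≤ 2*n) (hb : b + 1 ≤ 2*n) :
    Integrable (fun ζ : ℂ => ζ^(a+1) * ((starRingEnd ℂ) ζ)^b * (W n M ζ : ℂ)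
          - ζ^a * ((starRingEnd ℂ) ζ)^(b+1) * (W n M ζ : ℂ)) :=
  (integrable_mono n M _ _ (by omega)).sub (integrable_mono n M _ _ (by omega))

lemma FF_integrable (n M : ℕ) (L : ℝ) (k : ℕ) (x : Fin 2) (k' : ℕ) (x' : Fin 2)
    (hk : k < n) (hk' : k' < n) : Integrable (FF n M L k x k' x') := by
  rw [funext (FF_eq n M L k x k' x')]
  refine integrable_finsetSum _ fun l hl => integrable_finsetSum _ fun l' hl' => ?_
  have := Finset.mem_range.mp hl
  have := Finset.mem_range.mp hl'
  exact (FF_term_integrable n M _ _ (by omega) (by omega)).const_mul _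

/-- Monomial pairing. -/
def PP (n M a b : ℕ) : ℂ :=
  (if a + 1 = b then (Real.pi * hm n M b : ℂ) else 0) -
    (if a = b + 1 then (Real.pi * hm n M a : ℂ) else 0)

lemma FF_integral (n M : ℕ) (L : ℝ) (k : ℕ) (x : Fin 2) (k' : ℕ) (x' : Fin 2)
    (hk : k < n) (hk' : k' < n) : ∫ ζ, FF n M L k x k' x' ζ =
      ∑ l ∈ range (k+1), ∑ l' ∈ range (k'+1),
      cf n L k x l * cf n L k' x' l' * PP n M (2*l+(x:ℕ)) (2*l'+(x':ℕ)) := by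
  rw [funext (FF_eq n M L k x k' x')]
  rw [integral_finsetSum]
  · refine Finset.sum_congr rfl fun l hl => ?_
    have := Finset.mem_range.mp hl
    rw [integral_finsetSum]
    · refine Finset.sum_congr rfl fun l' hl' => ?_
      have := Finset.mem_range.mp hl'
      rw [integral_const_mul, integral_sub (integrable_mono n M _ _ (by omega))
        (integrable_mono n M _ _ (by omega)), moment _ _ _ _ (by omega), moment _ _ _ _ (by omega)]
      congr 2
      split_ifs with h
      · rw [← h]
      · rfl
    · intro l' hl'
      have := Finset.mem_range.mp hl'
      exact (FF_term_integrable n M _ _ (by omega) (by omega)).const_mul _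
  · intro l hl
    have := Finset.mem_range.mp hl
    refine integrable_finsetSum _ fun l' hl' => ?_
    have := Finset.mem_range.mp hl'
    exact (FF_term_integrable n M _ _ (by omega) (by omega)).const_mul _

lemma PP_anti (n M a b : ℕ) : PP n M a b = - PP n M b a := by
  unfold PP
  simp only [eq_comm (a := b) (b := a + 1), eq_comm (a := b + 1) (b := a)]
  ring

lemma FF_anti (n M : ℕ) (L : ℝ) (k : ℕ) (x : Fin 2) (k' : ℕ) (x' : Fin 2)
    (hk : k < n) (hk' : k' < n) : ∫ ζ, FF n M L k x k' x' ζ = - ∫ ζ, FF n M L k' x' k x ζ := by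
  rw [FF_integral _ _ _ _ _ _ _ hk hk', FF_integral _ _ _ _ _ _ _ hk' hk, Finset.sum_comm,
    ← Finset.sum_neg_distrib]
  refine Finset.sum_congr rfl fun l _ => ?_
  rw [← Finset.sum_neg_distrib]
  refine Finset.sum_congr rfl fun l' _ => ?_
  rw [PP_anti]; ring

lemma FF_same (n M : ℕ) (L : ℝ) (k : ℕ) (x : Fin 2) (k' : ℕ)
    (hk : k < n) (hk' : k' < n) : ∫ ζ, FF n M L k x k' x ζ = 0 := by
  rw [FF_integral _ _ _ _ _ _ _ hk hk']
  refine Finset.sum_eq_zero fun l _ => Finset.sum_eq_zero fun l' _ => ?_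
  rw [PP, if_neg (by omega), if_neg (by omega)]; simp

lemma FF_zero_one (n M : ℕ) (L : ℝ) (hL : 0 ≤ L) (hM : 2*L = (M:ℝ)) (k k' : ℕ)
    (hk : k < n) (hk' : k' < n) : ∫ ζ, FF n M L k 0 k' 1 ζ =
      if k = k' then (Real.pi * hm n M (2*k+1) : ℂ) else 0 := by
  rw [FF_integral _ _ _ _ _ _ _ hk hk']
  have e1 : ∀ l, ∑ l' ∈ range (k'+1),
      cf n L k 0 l * cf n L k' 1 l' * PP n M (2*l+((0:Fin 2):ℕ)) (2*l'+((1:Fin 2):ℕ)) =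
      (if l = k' then cf n L k 0 k' * (Real.pi * hm n M (2*k'+1)) else 0) -
      (if l = k'+1 then cf n L k 0 (k'+1) * (Real.pi * hm n M (2*k'+2)) else 0) := by
    intro l
    rw [Finset.sum_eq_single k']
    · rw [cf_self n L hL k' hk'.le, PP]
      simp only [Fin.val_zero, Fin.val_one, add_zero, mul_one]
      by_cases h1 : l = k'
      · subst h1; rw [if_pos rfl, if_neg (by omega), if_pos rfl, if_neg (by omega)]; ring
      · by_cases h2 : l = k'+1
        · subst h2
          rw [if_neg (by omega), if_pos (by omega), if_neg (by omega), if_pos rfl]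
          rw [show 2*(k'+1) = 2*k'+2 by ring]; ring
        · rw [if_neg (by omega), if_neg (by omega), if_neg h1, if_neg h2]; simp
    · intro l' _ hl'
      simp [cf, hl']
    · simp
  simp_rw [e1]
  rw [Finset.sum_sub_distrib, Finset.sum_ite_eq', Finset.sum_ite_eq']
  simp only [Finset.mem_range]
  rcases lt_trichotomy k k' with h | h | h
  · rw [if_neg (by omega), if_neg (by omega), if_neg (by omega), sub_zero]
  · subst h
    rw [if_pos (by omega), if_neg (by omega), if_pos rfl, cf_self n L hL k hk.le]
    ring
  · rw [if_pos (by omega), if_pos (by omega), if_neg (by omega)]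
    have hr := Ec_rec n M L hL hM k' (by omega)
    have hr' : ((Ec n L k' : ℝ):ℂ) * hm n M (2*k'+1) = Ec n L (k'+1) * hm n M (2*k'+2) := by
      exact_mod_cast hr
    simp only [cf, if_true]
    push_cast
    linear_combination ((Ec n L k : ℂ)⁻¹ * Real.pi) * hr'

lemma FF_off (n M : ℕ) (L : ℝ) (hL : 0 ≤ L) (hM : 2*L = (M:ℝ)) (k : ℕ) (x : Fin 2) (k' : ℕ) (x' : Fin 2)
    (hk : k < n) (hk' : k' < n) (hne : k ≠ k') : ∫ ζ, FF n M L k x k' x' ζ = 0 := by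
  have hx : ∀ x : Fin 2, x = 0 ∨ x = 1 := by decide
  rcases hx x with rfl | rfl <;> rcases hx x' with rfl | rfl
  · exact FF_same n M L k 0 k' hk hk'
  · rw [FF_zero_one n M L hL hM k k' hk hk', if_neg hne]
  · rw [FF_anti _ _ _ _ _ _ _ hk hk', FF_zero_one n M L hL hM k' k hk' hk, if_neg hne.symm, neg_zero]
  · exact FF_same n M L k 1 k' hk hk'

lemma jointDen_eq {N : ℕ} (n M : ℕ) (L : ℝ) (hL : 0 ≤ L) (hM : 2*L = (M:ℝ)) (hn : N ≤ n)
    (ζs : Fin N → ℂ) :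
    (jointDen N n L ζs : ℂ) = ∑ σ : Equiv.Perm (Fin N × Fin 2), ((Equiv.Perm.sign σ : ℤ) : ℂ) *
      ∏ j, FF n M L (σ (j,0)).1 (σ (j,0)).2 (σ (j,1)).1 (σ (j,1)).2 (ζs j) := by
  set x : Fin N × Fin 2 → ℂ := fun a => if a.2 = 0 then ζs a.1 else (starRingEnd ℂ) (ζs a.1) with hx
  have h0 : ∀ j, x (j,0) = ζs j := fun j => by simp [hx]
  have h1 : ∀ j, x (j,1) = (starRingEnd ℂ) (ζs j) := fun j => by simp [hx]
  have hv := vander ζs x h0 h1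
  rw [Matrix.det_eval_matrixOfPolynomials_eq_det_vandermonde _
    (fun i => qq n L (finProdFinEquiv.symm i).1 (finProdFinEquiv.symm i).2)
    (fun i => by
      rw [(qq_monic n L hL _ (by omega) _).2]
      conv_rhs => rw [← finProdFinEquiv.apply_symm_apply i]
      rfl)
    (fun i => (qq_monic n L hL _ (by omega) _).1)] at hv
  rw [← Matrix.det_submatrix_equiv_self finProdFinEquiv, ← Matrix.det_transpose,
    Matrix.det_apply'] at hv
  simp only [Matrix.transpose_apply, Matrix.submatrix_apply, Matrix.of_apply,
    Equiv.symm_apply_apply, Fintype.prod_prod_type, Fin.prod_univ_two, h0, h1] at hv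
  unfold FF jointDen
  simp only [wfun_eq n M L hM]
  rw [Complex.ofReal_mul]
  have hn : ∀ z : ℂ, ((‖z‖ : ℝ) : ℂ)^2 = z * (starRingEnd ℂ) z := by
    intro z; rw [Complex.mul_conj, Complex.normSq_eq_norm_sq]; push_cast; rfl
  have e : ((∏ j : Fin N, (‖ζs j - (starRingEnd ℂ) (ζs j)‖ ^ 2 * W n M (ζs j)) : ℝ) : ℂ) =
      (∏ j, ((starRingEnd ℂ) (ζs j) - ζs j)) *
        ∏ j, ((ζs j - (starRingEnd ℂ) (ζs j)) * (W n M (ζs j) : ℂ)) := by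
    rw [← Finset.prod_mul_distrib]
    push_cast
    refine Finset.prod_congr rfl fun j _ => ?_
    rw [hn, map_sub, Complex.conj_conj]
    ring
  rw [e, ← mul_assoc, ← hv, Finset.sum_mul]
  refine Finset.sum_congr rfl fun σ _ => ?_
  rw [mul_assoc, ← Finset.prod_mul_distrib]

lemma ZN_eq (m n M : ℕ) (L : ℝ) (hL : 0 ≤ L) (hM : 2*L = (M:ℝ)) (hn : m + 1 ≤ n) :
    ((∫ ζs : Fin (m+1) → ℂ, jointDen (m+1) n L ζs : ℝ) : ℂ) =
      ((m+1).factorial : ℂ) * ∏ k : Fin (m+1), (2 * (Real.pi * hm n M (2*k+1)) : ℂ) := by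
  rw [← integral_complex_ofReal]
  simp_rw [jointDen_eq n M L hL hM hn]
  rw [integral_finsetSum]
  · simp_rw [integral_const_mul]
    have e : ∀ σ : Equiv.Perm (Fin (m+1) × Fin 2),
        ∫ ζs : Fin (m+1) → ℂ, ∏ j, FF n M L (σ (j,0)).1 (σ (j,0)).2 (σ (j,1)).1 (σ (j,1)).2 (ζs j) =
        ∏ j, ∫ ζ, FF n M L (σ (j,0)).1 (σ (j,0)).2 (σ (j,1)).1 (σ (j,1)).2 ζ := fun σ =>
      integral_fintype_prod_volume_eq_prod
        (fun j => FF n M L (σ (j,0)).1 (σ (j,0)).2 (σ (j,1)).1 (σ (j,1)).2)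
    simp_rw [e]
    rw [comb (fun _ a b => ∫ ζ, FF n M L a.1 a.2 b.1 b.2 ζ) (by
      intro j _ a b hab
      exact FF_off n M L hL hM _ _ _ _ (by omega) (by omega) (fun h => hab (Fin.ext h)))]
    have e2 : ∀ k : Fin (m+1), (∫ ζ, FF n M L k 0 k 1 ζ) - (∫ ζ, FF n M L k 1 k 0 ζ) =
        (2 * (Real.pi * hm n M (2*k+1)) : ℂ) := by
      intro k
      rw [FF_anti n M L k 1 k 0 (by omega) (by omega),
        FF_zero_one n M L hL hM k k (by omega) (by omega), if_pos rfl]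
      ring
    simp only [e2]
    simp_rw [fun p : Equiv.Perm (Fin (m+1)) =>
      Equiv.prod_comp p (fun k : Fin (m+1) => (2 * (Real.pi * hm n M (2*k+1)) : ℂ))]
    simp [Fintype.card_perm]
  · intro σ _
    apply Integrable.const_mul
    exact Integrable.fintype_prod (μ := fun _ => volume)
      (f := fun j => FF n M L (σ (j,0)).1 (σ (j,0)).2 (σ (j,1)).1 (σ (j,1)).2)
      (fun j => FF_integrable n M L _ _ _ _ (by omega) (by omega))

lemma R_eq (m n M : ℕ) (L : ℝ) (hL : 0 ≤ L) (hM : 2*L = (M:ℝ)) (hn : m + 1 ≤ n) (ζ : ℂ) :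
    ((∫ ζs : Fin m → ℂ, jointDen (m+1) n L (Fin.cons ζ ζs) : ℝ) : ℂ) =
      (m.factorial : ℂ) * ∑ k : Fin (m+1), (FF n M L k 0 k 1 ζ - FF n M L k 1 k 0 ζ) /
        (2 * (Real.pi * hm n M (2*k+1)) : ℂ) *
        ∏ k : Fin (m+1), (2 * (Real.pi * hm n M (2*k+1)) : ℂ) := by
  rw [← integral_complex_ofReal]
  simp_rw [jointDen_eq n M L hL hM hn, Fin.prod_univ_succ, Fin.cons_zero, Fin.cons_succ]
  rw [integral_finsetSum]
  · simp_rw [integral_const_mul]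
    have e : ∀ σ : Equiv.Perm (Fin (m+1) × Fin 2),
        ∫ ζs : Fin m → ℂ, ∏ j : Fin m, FF n M L (σ (j.succ,0)).1 (σ (j.succ,0)).2
            (σ (j.succ,1)).1 (σ (j.succ,1)).2 (ζs j) =
        ∏ j : Fin m, ∫ ζ, FF n M L (σ (j.succ,0)).1 (σ (j.succ,0)).2
            (σ (j.succ,1)).1 (σ (j.succ,1)).2 ζ := fun σ =>
      integral_fintype_prod_volume_eq_prod
        (fun j : Fin m => FF n M L (σ (j.succ,0)).1 (σ (j.succ,0)).2 (σ (j.succ,1)).1 (σ (j.succ,1)).2)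
    simp_rw [e]
    have hc := comb (m := m) (fun j a b => if j = 0 then FF n M L a.1 a.2 b.1 b.2 ζ
      else ∫ ζ, FF n M L a.1 a.2 b.1 b.2 ζ) (by
      intro j hj a b hab
      simp only [if_neg hj]
      exact FF_off n M L hL hM _ _ _ _ (by omega) (by omega) (fun h => hab (Fin.ext h)))
    simp only [Fin.prod_univ_succ, if_true, if_neg (Fin.succ_ne_zero _)] at hc
    rw [hc]
    have e2 : ∀ k : Fin (m+1), (∫ ζ, FF n M L k 0 k 1 ζ) - (∫ ζ, FF n M L k 1 k 0 ζ) =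
        (2 * (Real.pi * hm n M (2*k+1)) : ℂ) := by
      intro k
      rw [FF_anti n M L k 1 k 0 (by omega) (by omega),
        FF_zero_one n M L hL hM k k (by omega) (by omega), if_pos rfl]
      ring
    simp only [e2]
    rw [← Fin.prod_univ_succ (fun k : Fin (m+1) => (2 * (Real.pi * hm n M (2*k+1)) : ℂ)),
      ← sum_perm_zero]
    refine Finset.sum_congr rfl fun p _ => ?_
    rw [← Equiv.prod_comp p (fun k : Fin (m+1) => (2 * (Real.pi * hm n M (2*k+1)) : ℂ)),
      Fin.prod_univ_succ, ← mul_assoc, div_mul_cancel₀]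
    have h1 : (hm n M (2*(p 0 : ℕ)+1) : ℂ) ≠ 0 := by exact_mod_cast (hm_pos _ _ _).ne'
    have h2 : (Real.pi : ℂ) ≠ 0 := by exact_mod_cast Real.pi_ne_zero
    simp [h1, h2]
  · intro σ _
    apply Integrable.const_mul
    apply Integrable.const_mul
    exact Integrable.fintype_prod (μ := fun _ => volume)
      (f := fun j : Fin m => FF n M L (σ (j.succ,0)).1 (σ (j.succ,0)).2
            (σ (j.succ,1)).1 (σ (j.succ,1)).2)
      (fun j => FF_integrable n M L _ _ _ _ (by omega) (by omega))

lemma qq_zero_eval (n : ℕ) (L : ℝ) (k : ℕ) (z : ℂ) : (qq n L k 0).eval z =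
    ∑ l ∈ range (k+1), ((Ec n L l / Ec n L k : ℝ) : ℂ) * z^(2*l) := by
  simp [qq, Polynomial.eval_finsetSum, cf]

lemma qq_one_eval (n : ℕ) (L : ℝ) (k : ℕ) (z : ℂ) : (qq n L k 1).eval z = z^(2*k+1) := by
  simp [qq, Polynomial.eval_finsetSum, cf]

lemma GK_eq (N n M : ℕ) (L : ℝ) (hL : 0 ≤ L) (hM : 2*L = (M:ℝ)) (hn : N ≤ n) (z w : ℂ) :
    GK N n L z w = z^M * w^M * ∑ k ∈ range N, z^(2*k+1) * (qq n L k 0).eval w /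
      (2 * hm n M (2*k+1) : ℂ) := by
  unfold GK
  rw [Finset.mul_sum, Finset.mul_sum]
  refine Finset.sum_congr rfl fun k hk => ?_
  have hk := Finset.mem_range.mp hk
  rw [qq_zero_eval, Finset.mul_sum, Finset.mul_sum, Finset.sum_div, Finset.mul_sum]
  refine Finset.sum_congr rfl fun l hl => ?_
  have hl := Finset.mem_range.mp hl
  have c1 : z ^ ((2*k+2*L+1 : ℝ) : ℂ) = z^(2*k+1) * z^M := by
    rw [← pow_add, ← Complex.cpow_natCast]; congr 1; rw [hM]; push_cast; ring
  have c2 : w ^ ((2*l+2*L : ℝ) : ℂ) = w^(2*l) * w^M := by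
    rw [← pow_add, ← Complex.cpow_natCast]; congr 1; rw [hM]; push_cast; ring
  have hd := dup n M L hL hM k (by omega)
  have c3 : (2:ℂ) ^ ((2*n+2*L+1 : ℝ) : ℂ) = (((2:ℝ)^(2*(n:ℝ)+2*L+1) : ℝ) : ℂ) := by
    rw [Complex.ofReal_cpow (by norm_num)]; norm_num
  rw [c1, c2, c3]
  simp only [Complex.Gamma_ofReal]
  have he := (Ec_pos n L hL k (by omega)).ne'
  have hh := (hm_pos n M (2*k+1)).ne'
  have hr : (Real.pi * Real.Gamma (2*n+2*L+2) / 2^(2*(n:ℝ)+2*L+1)) *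
      (1 / (Real.Gamma ((k:ℝ)+L+3/2) * Real.Gamma ((n:ℝ)-k) * Real.Gamma ((n:ℝ)-l+1/2) *
        Real.Gamma ((l:ℝ)+L+1))) = Ec n L l / Ec n L k / (2 * hm n M (2*k+1)) := by
    have : Ec n L l / Ec n L k / (2 * hm n M (2*k+1)) =
      Ec n L l * (1 / (Ec n L k * (2 * hm n M (2*k+1)))) := by
      field_simp
    rw [this, hd, Ec]
    simp only [div_eq_mul_inv, mul_inv]
    ring
  have hr' := congrArg (fun x : ℝ => (x : ℂ)) hr
  push_cast at hr' ⊢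
  linear_combination (z^(2*k+1) * z^M * (w^(2*l) * w^M)) * hr'

/-- Proposition 1.1(a), k = 1: the one-point correlation function of the
symplectic induced spherical ensemble. -/
theorem one_point_correlation (N n M : ℕ) (L : ℝ) (hN : 1 ≤ N) (hn : N ≤ n)
    (hL : 0 ≤ L) (hM : 2*L = (M : ℝ)) (ζ : ℂ) :
    (R1 N n L ζ : ℂ) =
      ((starRingEnd ℂ) ζ - ζ) * KK N n L ζ ((starRingEnd ℂ) ζ) /
        (((1 + ‖ζ‖ ^ 2) ^ (2*(n:ℝ)+2*L+2) : ℝ) : ℂ) := by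
  obtain ⟨m, rfl⟩ : ∃ m, N = m + 1 := ⟨N - 1, by omega⟩
  have hR : (R1 (m+1) n L ζ : ℂ) = ∑ k : Fin (m+1), (FF n M L k 0 k 1 ζ - FF n M L k 1 k 0 ζ) /
        (2 * hm n M (2*k+1) : ℂ) := by
    have h1 := R_eq m n M L hL hM hn ζ
    have h2 := ZN_eq m n M L hL hM hn
    unfold R1 ZN
    change (((m+1 : ℕ) * ((Real.pi)⁻¹ ^ (m+1) * ∫ ζs : Fin (m+1) → ℂ, jointDen (m+1) n L ζs)⁻¹ *
      (Real.pi)⁻¹ ^ m * ∫ ζs : Fin m → ℂ, jointDen (m+1) n L (Fin.cons ζ ζs) : ℝ) : ℂ) = _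
    rw [Complex.ofReal_mul, h1, Complex.ofReal_mul, Complex.ofReal_mul, Complex.ofReal_inv,
      Complex.ofReal_mul, h2]
    have hp : (Real.pi : ℂ) ≠ 0 := by exact_mod_cast Real.pi_ne_zero
    have hprod : ∏ k : Fin (m+1), (2 * (Real.pi * hm n M (2*k+1)) : ℂ) ≠ 0 := by
      refine Finset.prod_ne_zero_iff.mpr fun k _ => ?_
      have h1 : (hm n M (2*(k : ℕ)+1) : ℂ) ≠ 0 := by exact_mod_cast (hm_pos _ _ _).ne'
      simp [h1, hp]
    have hf : (m.factorial : ℂ) ≠ 0 := by exact_mod_cast m.factorial_ne_zero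
    have hm1 : ((m:ℂ) + 1) ≠ 0 := by exact_mod_cast m.succ_ne_zero
    rw [← Finset.sum_mul]
    have e3 : ∑ k : Fin (m+1), (FF n M L k 0 k 1 ζ - FF n M L k 1 k 0 ζ) /
        (2 * (Real.pi * hm n M (2*k+1)) : ℂ) = (∑ k : Fin (m+1),
        (FF n M L k 0 k 1 ζ - FF n M L k 1 k 0 ζ) / (2 * hm n M (2*k+1) : ℂ)) * (Real.pi : ℂ)⁻¹ := by
      rw [Finset.sum_mul]
      refine Finset.sum_congr rfl fun k _ => ?_
      simp only [div_eq_mul_inv, mul_inv]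
      ring
    rw [e3, Nat.factorial_succ]
    push_cast
    set S := ∑ k : Fin (m+1), (FF n M L k 0 k 1 ζ - FF n M L k 1 k 0 ζ) / (2 * hm n M (2*k+1) : ℂ)
    set Q := ∏ k : Fin (m+1), (2 * (Real.pi * hm n M (2*k+1)) : ℂ)
    rw [pow_succ]
    field_simp
  rw [hR, KK, GK_eq _ n M L hL hM hn, GK_eq _ n M L hL hM hn,
    Fin.sum_univ_eq_sum_range (fun k => (FF n M L k 0 k 1 ζ - FF n M L k 1 k 0 ζ) /
        (2 * hm n M (2*k+1) : ℂ)), mul_comm (((starRingEnd ℂ) ζ)^M), ← mul_sub,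
    ← Finset.sum_sub_distrib, Finset.mul_sum, Finset.mul_sum, Finset.sum_div]
  refine Finset.sum_congr rfl fun k _ => ?_
  have hW : (W n M ζ : ℂ) = ζ^M * ((starRingEnd ℂ) ζ)^M /
      (((1 + ‖ζ‖ ^ 2) ^ (2*(n:ℝ)+2*L+2) : ℝ) : ℂ) := by
    rw [← mul_pow, Complex.mul_conj, Complex.normSq_eq_norm_sq, W,
      show 2*(n:ℝ)+2*L+2 = ((2*n+M+2 : ℕ) : ℝ) by rw [hM]; push_cast; ring, Real.rpow_natCast,
      pow_mul]
    push_cast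
    rfl
  unfold FF
  rw [hW, qq_one_eval, qq_one_eval]
  ring

end SI
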